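/- Bound states of the isotonic oscillator: let n ∈ ℕ₀, let m ∈ ℂ with Re(m) > −1, let k ∈ ℂ with Re(k) > 0, and set β := k(2n + m + 1). Then the function u(v) := 𝕀_{β/k, m}(√k · v) on ]0,∞[ (with √k the principal square root) satisfies: (i) −u''(v) + (m² − 1/4)·v^{−2}·u(v) + k²v²·u(v) = 2β·u(v) for all v > 0; (ii) ∫_0^∞ |u(v)|² dv < ∞. Hence 2β = 2k(2n + m + 1) belongs to the point spectrum of the isotonic oscillator N_{k,m} = −∂_v² + (m² − 1/4)/v² + k²v². -/

import Mathlib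

open Complex Set MeasureTheory

/-- Olver-normalized confluent hypergeometric function
`₁𝐅₁(a; c; w) = ∑ (a)ₙ wⁿ/(n! Γ(c+n))`. -/
noncomputable def oneF1reg (a c w : ℂ) : ℂ :=
  ∑' n : ℕ, (ascPochhammer ℂ n).eval a * w ^ n / ((n.factorial : ℂ) * Complex.Gamma (c + n))

/-- Isotonic-oscillator Whittaker-type function
`𝕀_{β,m}(z) = z^{1/2+m} e^{-z²/2} ₁𝐅₁((1+m-β)/2; 1+m; z²)` (principal branch powers). -/
noncomputable def isoI (β m z : ℂ) : ℂ :=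
  z ^ ((1 : ℂ) / 2 + m) * Complex.exp (-z ^ 2 / 2) *
    oneF1reg ((1 + m - β) / 2) (1 + m) (z ^ 2)

noncomputable def isoC (n : ℕ) (m : ℂ) (j : ℕ) : ℂ :=
  (ascPochhammer ℂ j).eval (-(n : ℂ)) / ((j.factorial : ℂ) * Complex.Gamma (1 + m + j))

noncomputable def isoP (n : ℕ) (m : ℂ) : Polynomial ℂ :=
  ∑ j ∈ Finset.range (n + 1), Polynomial.monomial j (isoC n m j)

lemma isoC_zero (n : ℕ) (m : ℂ) (j : ℕ) (h : n < j) : isoC n m j = 0 := by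
  simp [isoC, ascPochhammer_eval_neg_coe_nat_of_lt h]

lemma isoP_coeff (n : ℕ) (m : ℂ) (j : ℕ) : (isoP n m).coeff j = isoC n m j := by
  simp only [isoP, Polynomial.finsetSum_coeff, Polynomial.coeff_monomial]
  rw [Finset.sum_ite_eq' (Finset.range (n + 1)) j]
  split_ifs with h
  · rfl
  · rw [isoC_zero]
    simpa using h

lemma oneF1_eq (n : ℕ) (m w : ℂ) : oneF1reg (-(n : ℂ)) (1 + m) w = (isoP n m).eval w := by
  unfold oneF1reg isoP
  rw [tsum_eq_sum (s := Finset.range (n + 1)), Polynomial.eval_finsetSum]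
  · refine Finset.sum_congr rfl fun j _ => ?_
    rw [Polynomial.eval_monomial, isoC]
    ring
  · intro j hj
    rw [ascPochhammer_eval_neg_coe_nat_of_lt (by simpa using hj)]
    simp

lemma isoC_succ (n : ℕ) (m : ℂ) (hm : -1 < m.re) (j : ℕ) :
    ((j : ℂ) + 1) * (1 + m + j) * isoC n m (j + 1) = ((j : ℂ) - n) * isoC n m j := by
  have hre : 0 < (1 + m + (j : ℂ)).re := by
    have : (0 : ℝ) ≤ j := j.cast_nonneg
    simp
    linarith
  have h0 : (1 + m + (j : ℂ)) ≠ 0 := by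
    intro h
    rw [h] at hre
    simp at hre
  have hG : Complex.Gamma (1 + m + j) ≠ 0 := Complex.Gamma_ne_zero_of_re_pos hre
  have hj : ((j : ℂ) + 1) ≠ 0 := by exact_mod_cast j.succ_ne_zero
  have hf : (j.factorial : ℂ) ≠ 0 := by exact_mod_cast j.factorial_ne_zero
  unfold isoC
  rw [ascPochhammer_succ_eval, Nat.factorial_succ]
  push_cast
  rw [← add_assoc, Complex.Gamma_add_one _ h0]
  field_simp
  ring

open Polynomial in
lemma isoP_ode (n : ℕ) (m : ℂ) (hm : -1 < m.re) :
    X * derivative (derivative (isoP n m)) + C (1 + m) * derivative (isoP n m)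
      - X * derivative (isoP n m) + C (n : ℂ) * isoP n m = 0 := by
  ext j
  have h := isoC_succ n m hm j
  cases j with
  | zero =>
    simp only [coeff_add, coeff_sub, coeff_C_mul, coeff_X_mul_zero, coeff_derivative, isoP_coeff,
      coeff_zero]
    push_cast at h ⊢
    linear_combination h
  | succ i =>
    simp only [coeff_add, coeff_sub, coeff_C_mul, coeff_X_mul, coeff_derivative, isoP_coeff,
      coeff_zero]
    push_cast at h ⊢
    linear_combination h

open Polynomial in
lemma iso_hasDeriv (s k : ℂ) (P : ℂ[X]) (v : ℝ) (hv : 0 < v) :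
    HasDerivAt (fun v : ℝ => (v : ℂ) ^ s * Complex.exp (-(k * (v : ℂ) ^ 2) / 2)
        * P.eval (k * (v : ℂ) ^ 2))
      ((v : ℂ) ^ (s - 1) * Complex.exp (-(k * (v : ℂ) ^ 2) / 2)
        * (C s * P - X * P + 2 * X * derivative P).eval (k * (v : ℂ) ^ 2)) v := by
  have hv0 : (v : ℂ) ≠ 0 := by exact_mod_cast hv.ne'
  have h1 : HasDerivAt (fun z : ℂ => z ^ s) (s * (v : ℂ) ^ (s - 1) * 1) (v : ℂ) :=
    (hasDerivAt_id (v : ℂ)).cpow_const (Or.inl (by simpa using hv))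
  have h2 : HasDerivAt (fun z : ℂ => k * z ^ 2) (k * (2 * (v : ℂ))) (v : ℂ) := by
    simpa using (hasDerivAt_pow 2 (v : ℂ)).const_mul k
  have h3 := (h2.neg.div_const 2).cexp
  have h4 : HasDerivAt (fun z : ℂ => P.eval (k * z ^ 2))
      ((derivative P).eval (k * (v : ℂ) ^ 2) * (k * (2 * (v : ℂ)))) (v : ℂ) :=
    HasDerivAt.comp (h₂ := fun w : ℂ => P.eval w) (v : ℂ) (P.hasDerivAt (k * (v : ℂ) ^ 2)) h2
  have h5 := ((h1.mul h3).mul h4).comp_ofReal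
  refine h5.congr_deriv ?_
  have h6 : (v : ℂ) ^ s = (v : ℂ) ^ (s - 1) * v := by
    rw [Complex.cpow_sub _ _ hv0, Complex.cpow_one]
    field_simp
  simp only [Pi.mul_apply, Pi.neg_apply, eval_add, eval_sub, eval_mul, eval_C, eval_X, eval_ofNat]
  rw [h6]
  ring

lemma iso_term_memLp (s k c : ℂ) (hs : -1 < 2 * s.re) (hk : 0 < k.re) (j : ℕ) :
    MemLp (fun v : ℝ => (v : ℂ) ^ s * Complex.exp (-(k * (v : ℂ) ^ 2) / 2)
        * (c * (k * (v : ℂ) ^ 2) ^ j)) 2 (volume.restrict (Ioi (0 : ℝ))) := by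
  rw [memLp_two_iff_integrable_sq_norm]
  · have h := (integrableOn_rpow_mul_exp_neg_mul_sq hk (s := 2 * s.re + 4 * j)
      (by have : (0 : ℝ) ≤ j := j.cast_nonneg
          linarith)).const_mul (‖c‖ ^ 2 * ‖k‖ ^ (2 * j))
    refine IntegrableOn.congr_fun h ?_ measurableSet_Ioi
    intro v hv
    have hv : 0 < v := hv
    simp only [norm_mul, norm_pow, Complex.norm_cpow_eq_rpow_re_of_pos hv, Complex.norm_exp,
      Complex.norm_real, Real.norm_of_nonneg hv.le]
    have e1 : v ^ (2 * s.re + 4 * j) = (v ^ s.re) ^ 2 * v ^ (4 * j) := by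
      rw [Real.rpow_add hv, mul_comm 2, Real.rpow_mul hv.le]
      norm_cast
    have e2 : Real.exp (-k.re * v ^ 2)
        = Real.exp (-(k * (v : ℂ) ^ 2) / 2 : ℂ).re ^ 2 := by
      rw [← Real.exp_nat_mul]
      congr 1
      have : (-(k * (v : ℂ) ^ 2) / 2 : ℂ) = ((v ^ 2 / 2 : ℝ) : ℂ) * (-k) := by
        push_cast
        ring
      rw [this, Complex.re_ofReal_mul]
      simp
      ring
    rw [e1, e2]
    ring
  · apply Measurable.aestronglyMeasurable
    fun_prop

lemma iso_form (n : ℕ) (m : ℂ) (k : ℂ) (hk : 0 < k.re)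
    (β : ℂ) (hβ : β = k * (2 * (n : ℂ) + m + 1)) (v : ℝ) (hv : 0 < v) :
    isoI (β / k) m (k ^ ((1 : ℂ) / 2) * v) = (k ^ ((1 : ℂ) / 2)) ^ ((1 : ℂ) / 2 + m) *
      ((v : ℂ) ^ ((1 : ℂ) / 2 + m) * Complex.exp (-(k * (v : ℂ) ^ 2) / 2)
        * (isoP n m).eval (k * (v : ℂ) ^ 2)) := by
  have hk0 : k ≠ 0 := by
    rintro rfl
    simp at hk
  have hq : (k ^ ((1 : ℂ) / 2)) ≠ 0 := by simp [Complex.cpow_eq_zero_iff, hk0]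
  have hq2 : (k ^ ((1 : ℂ) / 2) * v) ^ 2 = k * (v : ℂ) ^ 2 := by
    rw [mul_pow, ← Complex.cpow_nat_mul]
    norm_num
  have hv0 : (v : ℂ) ≠ 0 := by exact_mod_cast hv.ne'
  have ha : (1 + m - β / k) / 2 = -(n : ℂ) := by
    rw [hβ]
    field_simp
    ring
  have hp : (k ^ ((1 : ℂ) / 2) * v) ^ ((1 : ℂ) / 2 + m)
      = (k ^ ((1 : ℂ) / 2)) ^ ((1 : ℂ) / 2 + m) * (v : ℂ) ^ ((1 : ℂ) / 2 + m) := by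
    generalize k ^ ((1 : ℂ) / 2) = q at hq ⊢
    rw [Complex.cpow_def_of_ne_zero (mul_ne_zero hq hv0), Complex.cpow_def_of_ne_zero hq,
      Complex.cpow_def_of_ne_zero hv0, Complex.log_mul_ofReal v hv q hq, ← Complex.exp_add,
      Complex.ofReal_log hv.le]
    congr 1
    ring
  unfold isoI
  rw [hq2, ha, oneF1_eq, hp]
  ring

/-- bound states of the isotonic oscillator: for `n ∈ ℕ₀`, `Re m > -1`,
`Re k > 0` and `β = k(2n+m+1)`, the function `u(v) = 𝕀_{β/k, m}(√k v)` solves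
`-u'' + (m²-1/4)v⁻²u + k²v²u = 2βu` on `]0,∞[` and is square integrable there; hence
`2β = 2k(2n+m+1)` is in the point spectrum of `N_{k,m}`. -/
theorem isotonic_bound_state (n : ℕ) (m : ℂ) (hm : -1 < m.re) (k : ℂ) (hk : 0 < k.re)
    (β : ℂ) (hβ : β = k * (2 * (n : ℂ) + m + 1))
    (u : ℝ → ℂ) (hu : ∀ v : ℝ, u v = isoI (β / k) m (k ^ ((1 : ℂ) / 2) * v)) :
    (∀ v : ℝ, 0 < v →
      -deriv (deriv u) v + (m ^ 2 - 1 / 4) / (v : ℂ) ^ 2 * u v +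
          k ^ 2 * (v : ℂ) ^ 2 * u v = 2 * β * u v) ∧
    IntegrableOn (fun v : ℝ => ‖u v‖ ^ 2) (Ioi (0 : ℝ)) := by
  set K : ℂ := (k ^ ((1 : ℂ) / 2)) ^ ((1 : ℂ) / 2 + m) with hK
  set s : ℂ := (1 : ℂ) / 2 + m with hs
  have hform : ∀ v : ℝ, 0 < v → u v = K * ((v : ℂ) ^ s * Complex.exp (-(k * (v : ℂ) ^ 2) / 2)
        * (isoP n m).eval (k * (v : ℂ) ^ 2)) := fun v hv => by
    rw [hu, iso_form n m k hk β hβ v hv]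
  constructor
  · have hd1 : ∀ v : ℝ, 0 < v → deriv u v = _ := fun v hv => by
      have h := ((iso_hasDeriv s k (isoP n m) v hv).const_mul K).congr_of_eventuallyEq
        (f₁ := u) (by filter_upwards [Ioi_mem_nhds hv] with x hx using hform x hx)
      exact h.deriv
    intro v hv
    have h2 := ((iso_hasDeriv (s - 1) k _ v hv).const_mul K).congr_of_eventuallyEq
        (f₁ := deriv u) (by filter_upwards [Ioi_mem_nhds hv] with x hx using hd1 x hx)
    rw [h2.deriv, hform v hv]
    have hv0 : (v : ℂ) ≠ 0 := by exact_mod_cast hv.ne'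
    have h6 : (v : ℂ) ^ s = (v : ℂ) ^ (s - 1 - 1) * v ^ 2 := by
      rw [sub_sub, Complex.cpow_sub _ _ hv0, one_add_one_eq_two, Complex.cpow_ofNat]
      field_simp
    rw [h6]
    have hode := congrArg (Polynomial.eval (k * (v : ℂ) ^ 2)) (isoP_ode n m hm)
    simp only [Polynomial.eval_add, Polynomial.eval_sub, Polynomial.eval_mul, Polynomial.eval_C,
      Polynomial.eval_X, Polynomial.eval_ofNat, Polynomial.derivative_add,
      Polynomial.derivative_sub, Polynomial.derivative_mul, Polynomial.derivative_C,
      Polynomial.derivative_X, Polynomial.derivative_ofNat, Polynomial.eval_zero,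
      Polynomial.eval_one] at hode ⊢
    rw [hβ]
    generalize (v : ℂ) ^ (s - 1 - 1) = A
    generalize Complex.exp (-(k * (v : ℂ) ^ 2) / 2) = E
    generalize Polynomial.eval (k * (v : ℂ) ^ 2)
      (Polynomial.derivative (Polynomial.derivative (isoP n m))) = p2 at hode ⊢
    generalize Polynomial.eval (k * (v : ℂ) ^ 2) (Polynomial.derivative (isoP n m)) = p1 at hode ⊢
    generalize Polynomial.eval (k * (v : ℂ) ^ 2) (isoP n m) = p at hode ⊢
    clear_value K
    rw [hs]
    field_simp
    linear_combination (-64 * K * A * E * k * (v : ℂ) ^ 2) * hode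
  · have hsum : MemLp (fun v : ℝ => K * ∑ j ∈ Finset.range (n + 1),
        ((v : ℂ) ^ s * Complex.exp (-(k * (v : ℂ) ^ 2) / 2)
        * (isoC n m j * (k * (v : ℂ) ^ 2) ^ j))) 2 (volume.restrict (Ioi (0 : ℝ))) := by
      have hs' : -1 < 2 * s.re := by
        simp [hs]
        linarith
      have hA := memLp_finsetSum (μ := volume.restrict (Ioi (0 : ℝ))) (p := 2)
        (Finset.range (n + 1))
        (f := fun (j : ℕ) (v : ℝ) => (v : ℂ) ^ s * Complex.exp (-(k * (v : ℂ) ^ 2) / 2)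
          * (isoC n m j * (k * (v : ℂ) ^ 2) ^ j))
        (fun j _ => iso_term_memLp s k (isoC n m j) hs' hk j)
      exact hA.const_mul K
    have h := (memLp_two_iff_integrable_sq_norm hsum.1).1 hsum
    refine IntegrableOn.congr_fun h ?_ measurableSet_Ioi
    intro v hv
    simp only
    rw [hform v hv, isoP, Polynomial.eval_finsetSum, ← Finset.mul_sum]
    simp only [Polynomial.eval_monomial]
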